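/- (Theorem 2, abstract local linear convergence) Let f : ℝⁿ → ℝ, let (α_k) be a sequence in ℝⁿ converging to α* ∈ ℝⁿ with f(α_k) ≥ f(α*) for all k, and suppose there exist γ_max > 0, c̄ > 0, c_φ > 0 and K₀ ∈ ℕ such that for all k ≥ K₀: (i) f(α_k) − f(α_{k+1}) ≥ (1/(2γ_max))·‖α_{k+1} − α_k‖², and (ii) ‖α_{k+1} − α_k‖ ≥ (2/(c̄·c_φ))·√(f(α_{k+1}) − f(α*)). Then, setting m = (1 + 2/(γ_max·c_φ²·c̄²))^{−1/2}, one has m ∈ (0,1) and there exists C > 0 such that ‖α_k − α*‖ ≤ C·m^k for all k ≥ K₀. -/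

import Mathlib

/-- **Theorem 2: abstract local linear convergence.** Let `f : ℝⁿ → ℝ`, let `(α_k)` be a
sequence in `ℝⁿ` converging to `α*` with `f(α_k) ≥ f(α*)` for all `k`, and suppose there
exist `γ_max > 0`, `c̄ > 0`, `c_φ > 0` and `K₀ ∈ ℕ` such that for all `k ≥ K₀`:
(i) `f(α_k) − f(α_{k+1}) ≥ (1/(2γ_max))·‖α_{k+1} − α_k‖²`, and
(ii) `‖α_{k+1} − α_k‖ ≥ (2/(c̄·c_φ))·√(f(α_{k+1}) − f(α*))`.
Then, with `m = (1 + 2/(γ_max·c_φ²·c̄²))^(−1/2)`, one has `m ∈ (0,1)` and there exists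
`C > 0` with `‖α_k − α*‖ ≤ C·m^k` for all `k ≥ K₀`. -/
theorem abstract_local_linear_convergence (n : ℕ)
    (f : EuclideanSpace ℝ (Fin n) → ℝ)
    (α : ℕ → EuclideanSpace ℝ (Fin n)) (αstar : EuclideanSpace ℝ (Fin n))
    (hlim : Filter.Tendsto α Filter.atTop (nhds αstar))
    (hge : ∀ k : ℕ, f (α k) ≥ f αstar)
    (γmax cbar cφ : ℝ) (hγ : 0 < γmax) (hcbar : 0 < cbar) (hcφ : 0 < cφ) (K₀ : ℕ)
    (h1 : ∀ k : ℕ, K₀ ≤ k →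
        f (α k) - f (α (k + 1)) ≥ (1 / (2 * γmax)) * ‖α (k + 1) - α k‖ ^ 2)
    (h2 : ∀ k : ℕ, K₀ ≤ k →
        ‖α (k + 1) - α k‖ ≥ (2 / (cbar * cφ)) * Real.sqrt (f (α (k + 1)) - f αstar)) :
    (0 < (1 + 2 / (γmax * cφ ^ 2 * cbar ^ 2)) ^ (-(1 / 2 : ℝ)) ∧
      (1 + 2 / (γmax * cφ ^ 2 * cbar ^ 2)) ^ (-(1 / 2 : ℝ)) < 1) ∧
    ∃ C : ℝ, 0 < C ∧ ∀ k : ℕ, K₀ ≤ k →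
      ‖α k - αstar‖ ≤ C * ((1 + 2 / (γmax * cφ ^ 2 * cbar ^ 2)) ^ (-(1 / 2 : ℝ))) ^ k := by
  set q : ℝ := 2 / (γmax * cφ ^ 2 * cbar ^ 2) with hq
  have hq0 : 0 < q := by positivity
  set m : ℝ := (1 + q) ^ (-(1 / 2 : ℝ)) with hm
  have hm0 : 0 < m := by positivity
  have hm1 : m < 1 := Real.rpow_lt_one_of_one_lt_of_neg (by linarith) (by norm_num)
  have hmq : m ^ 2 * (1 + q) = 1 := by
    have h : m ^ 2 = (1 + q)⁻¹ := by
      rw [hm, ← Real.rpow_natCast, ← Real.rpow_mul (by positivity), ← Real.rpow_neg_one]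
      norm_num
    rw [h]
    exact inv_mul_cancel₀ (by positivity)
  refine ⟨⟨hm0, hm1⟩, ?_⟩
  have hstep : ∀ k, K₀ ≤ k →
      f (α (k + 1)) - f αstar ≤ m ^ 2 * (f (α k) - f αstar) := by
    intro k hk
    have a := h1 k hk
    have b := h2 k hk
    have hr : 0 ≤ f (α (k + 1)) - f αstar := by linarith [hge (k + 1)]
    have c : ((2 / (cbar * cφ)) * Real.sqrt (f (α (k + 1)) - f αstar)) ^ 2
        ≤ ‖α (k + 1) - α k‖ ^ 2 := pow_le_pow_left₀ (by positivity) b 2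
    rw [mul_pow, Real.sq_sqrt hr] at c
    have d := mul_le_mul_of_nonneg_left c (by positivity : 0 ≤ 1 / (2 * γmax))
    have e : 1 / (2 * γmax) * ((2 / (cbar * cφ)) ^ 2 * (f (α (k + 1)) - f αstar))
        = q * (f (α (k + 1)) - f αstar) := by
      rw [hq]
      field_simp
      try ring
    have g : (1 + q) * (f (α (k + 1)) - f αstar) ≤ f (α k) - f αstar := by linarith
    calc f (α (k + 1)) - f αstar
        = m ^ 2 * ((1 + q) * (f (α (k + 1)) - f αstar)) := by
          rw [← mul_assoc, hmq, one_mul]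
      _ ≤ _ := mul_le_mul_of_nonneg_left g (by positivity)
  have hdec : ∀ j, f (α (j + K₀)) - f αstar ≤ (m ^ j) ^ 2 * (f (α K₀) - f αstar) := by
    intro j
    induction j with
    | zero => simp
    | succ j ih =>
      have a := hstep (j + K₀) (by omega)
      have b := mul_le_mul_of_nonneg_left ih (by positivity : 0 ≤ m ^ 2)
      rw [show j + 1 + K₀ = j + K₀ + 1 by omega]
      calc _ ≤ _ := a
        _ ≤ _ := b
        _ = _ := by ring
  set D : ℝ := Real.sqrt (2 * γmax * (f (α K₀) - f αstar)) with hD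
  have hr0 : 0 ≤ f (α K₀) - f αstar := by linarith [hge K₀]
  have hD0 : 0 ≤ D := Real.sqrt_nonneg _
  have hDsq : D ^ 2 = 2 * γmax * (f (α K₀) - f αstar) := Real.sq_sqrt (by positivity)
  have hdist : ∀ j, dist (α (j + K₀)) (α (j + 1 + K₀)) ≤ D * m ^ j := by
    intro j
    rw [dist_comm, dist_eq_norm, show j + 1 + K₀ = j + K₀ + 1 by omega]
    refine (sq_le_sq₀ (norm_nonneg _) (by positivity)).1 ?_
    have a := h1 (j + K₀) (by omega)
    have b := hge (j + K₀ + 1)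
    have c : 1 / (2 * γmax) * ‖α (j + K₀ + 1) - α (j + K₀)‖ ^ 2
        ≤ (m ^ j) ^ 2 * (f (α K₀) - f αstar) := by linarith [hdec j]
    have d := mul_le_mul_of_nonneg_left c (by positivity : 0 ≤ 2 * γmax)
    rw [← mul_assoc, mul_one_div_cancel (by positivity), one_mul] at d
    rw [mul_pow, hDsq]
    linarith
  have hlim' : Filter.Tendsto (fun j => α (j + K₀)) Filter.atTop (nhds αstar) :=
    hlim.comp (Filter.tendsto_add_atTop_nat K₀)
  have hfin := dist_le_of_le_geometric_of_tendsto m D hm1 hdist hlim'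
  have h1m : 0 < 1 - m := by linarith
  refine ⟨(D + 1) / ((1 - m) * m ^ K₀), by positivity, ?_⟩
  intro k hk
  obtain ⟨j, rfl⟩ := Nat.exists_eq_add_of_le' hk
  have a := hfin j
  rw [dist_eq_norm] at a
  calc ‖α (j + K₀) - αstar‖ ≤ D * m ^ j / (1 - m) := a
    _ ≤ (D + 1) * m ^ j / (1 - m) := by gcongr; linarith
    _ = _ := by
      rw [pow_add]
      field_simp
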